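/- If a nonnegative sequence (a_k)_{k=0}^∞ is a TP_∞-preserver, then the sequence ((k+1)·a_k)_{k=0}^∞ (the coefficient sequence of (z·A(z))′, where A(z) = ∑ a_k z^k) is a totally positive sequence. -/

import Mathlib

/-- A real sequence `(a_k)` is totally positive (TP_∞) if all finite minors of the
infinite Toeplitz matrix `(a_{j-i})` (with `a_k = 0` for `k < 0`) are nonnegative. -/
def IsTotallyPositive (a : ℕ → ℝ) : Prop :=
  ∀ (n : ℕ) (i j : Fin n → ℕ), StrictMono i → StrictMono j →
    0 ≤ (Matrix.of fun p q : Fin n => if i p ≤ j q then a (j q - i p) else 0).det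

/-- A real sequence is `m`-times positive (TP_m) if all such minors of order at most `m`
are nonnegative. -/
def IsMultiplyPositive (m : ℕ) (a : ℕ → ℝ) : Prop :=
  ∀ (n : ℕ), n ≤ m → ∀ (i j : Fin n → ℕ), StrictMono i → StrictMono j →
    0 ≤ (Matrix.of fun p q : Fin n => if i p ≤ j q then a (j q - i p) else 0).det

/-- A nonnegative sequence `(a_k)` is a TP_∞-preserver if for every totally positive
sequence `(b_k)`, the sequence `(a_k b_k)` is totally positive. -/
def IsTPPreserver (a : ℕ → ℝ) : Prop :=
  ∀ b : ℕ → ℝ, IsTotallyPositive b → IsTotallyPositive (fun k => a k * b k)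

/-!
Minors of a product of matrices are sums of products of minors of the factors (Cauchy–Binet), so
convolution preserves total positivity. The constant sequence `1` is totally positive, hence so is
its convolution square `k + 1`, the coefficient sequence of `1 / (1 - z) ^ 2`. A preserver `a`
applied to this sequence gives `(k + 1) * a k`.
-/

open Finset Matrix
open scoped Nat

section CauchyBinet

variable {n l R : Type*} [Fintype n] [DecidableEq n] [CommRing R]

theorem det_submatrix_mul_det_submatrix_comp_perm (A : Matrix n l R)
    (B : Matrix l n R) (f : n → l) (σ : Equiv.Perm n) :
    (A.submatrix id (f ∘ σ)).det * (B.submatrix (f ∘ σ) id).det =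
      (A.submatrix id f).det * (B.submatrix f id).det := by
  rw [← det_mul, ← det_mul]
  exact congrArg det (submatrix_mul_equiv (A.submatrix id f) (B.submatrix f id) id σ id)

variable [Fintype l]

theorem det_mul_eq_sum_prod_mul_det_submatrix (A : Matrix n l R) (B : Matrix l n R) :
    (A * B).det = ∑ f : n → l, (∏ i, A i (f i)) * (B.submatrix f id).det := by
  have hrows : A * B = fun i => ∑ k, A i k • B k := by
    ext i j
    simp only [mul_apply, Finset.sum_apply, Pi.smul_apply, smul_eq_mul]
  calc (A * B).det = detRowAlternating fun i => ∑ k, A i k • B k := by rw [hrows]; rfl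
    _ = ∑ f : n → l, detRowAlternating fun i => A i (f i) • B (f i) :=
      detRowAlternating.toMultilinearMap.map_sum fun i k => A i k • B k
    _ = ∑ f : n → l, (∏ i, A i (f i)) * (B.submatrix f id).det :=
      sum_congr rfl fun f _ =>
        detRowAlternating.toMultilinearMap.map_smul_univ (fun i => A i (f i)) fun i => B (f i)

-- Cauchy–Binet over maps instead of subsets: each subset is counted once for each of its orderings.
theorem factorial_card_mul_det_mul (A : Matrix n l R) (B : Matrix l n R) :
    ((Fintype.card n)! : R) * (A * B).det =
      ∑ f : n → l, (A.submatrix id f).det * (B.submatrix f id).det := by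
  have hperm (σ : Equiv.Perm n) : (A * B).det = ∑ f : n → l,
      (Equiv.Perm.sign σ : R) * (∏ i, A i (f (σ i))) * (B.submatrix f id).det := by
    rw [det_mul_eq_sum_prod_mul_det_submatrix,
      ← Equiv.sum_comp (σ.symm.arrowCongr (Equiv.refl l))]
    refine sum_congr rfl fun f _ => ?_
    have hdet : (B.submatrix (f ∘ σ) id).det =
        (Equiv.Perm.sign σ : R) * (B.submatrix f id).det :=
      det_permute σ (B.submatrix f id)
    change (∏ i, A i (f (σ i))) * (B.submatrix (f ∘ σ) id).det = _
    rw [hdet]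
    ring
  calc ((Fintype.card n)! : R) * (A * B).det
      = ∑ _σ : Equiv.Perm n, (A * B).det := by
        rw [sum_const, card_univ, Fintype.card_perm, nsmul_eq_mul]
    _ = ∑ σ : Equiv.Perm n, ∑ f : n → l,
          (Equiv.Perm.sign σ : R) * (∏ i, A i (f (σ i))) * (B.submatrix f id).det :=
        sum_congr rfl fun σ _ => hperm σ
    _ = ∑ f : n → l, (A.submatrix id f).det * (B.submatrix f id).det := by
        rw [sum_comm]
        refine sum_congr rfl fun f _ => ?_
        rw [← sum_mul, ← det_transpose (A.submatrix id f), det_apply' (A.submatrix id f)ᵀ]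
        rfl

end CauchyBinet

theorem det_mul_nonneg_of_strictMono {n : ℕ} {l R : Type*} [Fintype l] [LinearOrder l]
    [CommRing R] [LinearOrder R] [IsStrictOrderedRing R] {A : Matrix (Fin n) l R}
    {B : Matrix l (Fin n) R}
    (hA : ∀ f : Fin n → l, StrictMono f → 0 ≤ (A.submatrix id f).det)
    (hB : ∀ f : Fin n → l, StrictMono f → 0 ≤ (B.submatrix f id).det) :
    0 ≤ (A * B).det := by
  have hterm (f : Fin n → l) : 0 ≤ (A.submatrix id f).det * (B.submatrix f id).det := by
    by_cases hf : Function.Injective f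
    · have hsort : StrictMono (f ∘ Tuple.sort f) :=
        (Tuple.monotone_sort f).strictMono_of_injective (hf.comp (Tuple.sort f).injective)
      rw [← det_submatrix_mul_det_submatrix_comp_perm A B f (Tuple.sort f)]
      exact mul_nonneg (hA _ hsort) (hB _ hsort)
    · obtain ⟨p, q, hpq, hne⟩ := Function.not_injective_iff.mp hf
      have hzero : (B.submatrix f id).det = 0 :=
        det_zero_of_row_eq hne (congrArg B hpq)
      rw [hzero, mul_zero]
  refine nonneg_of_mul_nonneg_right ?_
    (Nat.cast_pos.mpr (Fintype.card (Fin n)).factorial_pos : (0 : R) < _)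
  rw [factorial_card_mul_det_mul]
  exact sum_nonneg fun f _ => hterm f

/-- The infinite upper triangular Toeplitz matrix `(a_{j-i})`, whose minors define total
positivity; the test `i ≤ j` guards against truncated subtraction. -/
def toeplitz {R : Type*} [Zero R] (a : ℕ → R) : Matrix ℕ ℕ R :=
  of fun i j => if i ≤ j then a (j - i) else 0

theorem isTotallyPositive_iff_toeplitz {a : ℕ → ℝ} :
    IsTotallyPositive a ↔ ∀ (n : ℕ) (i j : Fin n → ℕ), StrictMono i → StrictMono j →
      0 ≤ ((toeplitz a).submatrix i j).det :=
  Iff.rfl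

theorem toeplitz_antidiagonal_sum_apply {R : Type*} [NonUnitalNonAssocSemiring R] (a b : ℕ → R)
    {i j N : ℕ} (hj : j < N) :
    toeplitz (fun k => ∑ p ∈ antidiagonal k, a p.1 * b p.2) i j =
      ∑ k : Fin N, toeplitz a i k * toeplitz b k j := by
  have hsupport : ∑ k ∈ Ico i (j + 1), toeplitz a i k * toeplitz b k j =
      ∑ k ∈ range N, toeplitz a i k * toeplitz b k j := by
    refine sum_subset (fun k hk => ?_) fun k _ hk => ?_
    · rw [mem_Ico] at hk
      rw [mem_range]
      lia
    · rw [mem_Ico, not_and_or, not_le, not_lt] at hk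
      rcases hk with hk | hk
      · simp [toeplitz, hk.not_ge]
      · simp [toeplitz, (Nat.lt_of_succ_le hk).not_ge]
  rw [Fin.sum_univ_eq_sum_range (fun k => toeplitz a i k * toeplitz b k j), ← hsupport,
    sum_Ico_eq_sum_range]
  rcases le_or_gt i j with hij | hij
  · obtain ⟨d, rfl⟩ := Nat.exists_eq_add_of_le hij
    have hlength : i + d + 1 - i = d + 1 := by lia
    simp only [toeplitz, of_apply, if_pos hij, Nat.add_sub_cancel_left, hlength,
      Nat.sum_antidiagonal_eq_sum_range_succ_mk]
    refine sum_congr rfl fun k hk => ?_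
    have hk' : k ≤ d := mem_range_succ_iff.mp hk
    simp [hk', Nat.add_sub_add_left]
  · simp [toeplitz, hij.not_ge, Nat.sub_eq_zero_of_le hij]

theorem IsTotallyPositive.antidiagonal_sum {a b : ℕ → ℝ} (ha : IsTotallyPositive a)
    (hb : IsTotallyPositive b) :
    IsTotallyPositive fun k => ∑ p ∈ antidiagonal k, a p.1 * b p.2 := by
  rw [isTotallyPositive_iff_toeplitz] at *
  intro n i j hi hj
  obtain ⟨N, hN⟩ : ∃ N, ∀ q, j q < N :=
    ⟨univ.sup j + 1, fun q => Nat.lt_succ_of_le (le_sup (mem_univ q))⟩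
  have hmul : (toeplitz fun k => ∑ p ∈ antidiagonal k, a p.1 * b p.2).submatrix i j =
      (toeplitz a).submatrix i (Fin.val : Fin N → ℕ) *
        (toeplitz b).submatrix (Fin.val : Fin N → ℕ) j := by
    ext p q
    exact toeplitz_antidiagonal_sum_apply a b (hN q)
  rw [hmul]
  exact det_mul_nonneg_of_strictMono
    (fun f hf => ha n i (Fin.val ∘ f) hi (Fin.val_strictMono.comp hf))
    (fun f hf => hb n (Fin.val ∘ f) j (Fin.val_strictMono.comp hf) hj)

theorem det_of_ite_le_nonneg {α R : Type*} [Preorder α] [DecidableLE α] [CommRing R]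
    [PartialOrder R] [IsOrderedRing R] {n : ℕ} {x y : Fin n → α} (hx : Monotone x)
    (hy : Monotone y) : 0 ≤ (of fun p q => if x p ≤ y q then (1 : R) else 0).det := by
  induction n with
  | zero => simp only [det_fin_zero, zero_le_one]
  | succ n ih =>
    by_cases h : ∃ p : Fin n, x p.succ ≤ y 0
    · obtain ⟨p, hp⟩ := h
      have hrow (r : Fin (n + 1)) (hr : r ≤ p.succ) (q : Fin (n + 1)) : x r ≤ y q :=
        (hx hr).trans (hp.trans (hy (Fin.zero_le q)))
      refine (det_zero_of_row_eq (Fin.succ_ne_zero p) ?_).ge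
      ext q
      simp only [of_apply, if_pos (hrow _ le_rfl q), if_pos (hrow 0 (Fin.zero_le _) q)]
    · push Not at h
      have hsucc : Monotone (Fin.succ : Fin n → Fin (n + 1)) := Fin.strictMono_succ.monotone
      have hcolumn : (of fun p q => if x p ≤ y q then (1 : R) else 0).det =
          (if x 0 ≤ y 0 then 1 else 0) *
            (of fun p q : Fin n => if x p.succ ≤ y q.succ then (1 : R) else 0).det := by
        have hzero (p : Fin n) : (of fun p q => if x p ≤ y q then (1 : R) else 0) p.succ 0 = 0 :=
          if_neg (h p)
        rw [det_succ_column_zero, Fin.sum_univ_succ]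
        simp only [hzero, mul_zero, zero_mul, sum_const_zero, add_zero, Fin.val_zero, pow_zero,
          one_mul, of_apply]
        rfl
      rw [hcolumn]
      refine mul_nonneg ?_ (ih (hx.comp hsucc) (hy.comp hsucc))
      split_ifs
      · exact zero_le_one
      · exact le_rfl

theorem isTotallyPositive_one : IsTotallyPositive fun _ => 1 :=
  fun _ _ _ hi hj => det_of_ite_le_nonneg hi.monotone hj.monotone

theorem isTotallyPositive_natCast_add_one : IsTotallyPositive fun k => (k : ℝ) + 1 := by
  simpa only [mul_one, sum_const, Nat.card_antidiagonal, nsmul_eq_mul, Nat.cast_add_one] using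
    isTotallyPositive_one.antidiagonal_sum isTotallyPositive_one

/-- if `a` is a TP_∞-preserver then `((k+1) * a_k)` is totally positive. -/
theorem stmt_6 (a : ℕ → ℝ) (ha : ∀ k, 0 ≤ a k) (hpres : IsTPPreserver a) :
    IsTotallyPositive (fun k => ((k : ℝ) + 1) * a k) := by
  simpa only [mul_comm] using hpres _ isTotallyPositive_natCast_add_one
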